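/- arXiv:2407.20698 — 4 statements merged into one kernel-verified Lean document; each statement's English description precedes it below -/
import Mathlib

section
/- Fix an integer q with 1 ≤ q ≤ 6 and let δ_0, …, δ_q be the q-step BDF coefficients defined by Σ_{j=0}^q δ_j ζ^j = Σ_{l=1}^q (1/l)(1−ζ)^l. There exists a constant c > 0, depending only on q, with the following property: for every normed real vector space (H, ‖·‖), every τ > 0, every n ≥ q, and every sequence (a^k)_{k≥0} in H, defining ∂^τ a^k := (a^k − a^{k−1})/τ for k ≥ 1 and ∂^τ_q a^k := (1/τ) Σ_{j=0}^q δ_j a^{k−j} for k ≥ q, one has Σ_{k=q}^n ‖∂^τ a^k‖² ≤ c Σ_{k=q}^n ‖∂^τ_q a^k‖² + c Σ_{i=1}^{q−1} ‖∂^τ a^i‖². -/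
/-!
Put `d k = a k - a (k - 1)` and let `T` be the right shift. The factorization `δ(ζ) = μ(ζ) (1 - ζ)`
turns the BDF derivative of `a` into `μ(T) d`, so one has to bound `d` by `μ(T) d`. The shift is a
contraction in every truncated `ℓᵖ` norm, so a polynomial in `T` whose constant coefficient exceeds
the sum of the absolute values of the others is bounded below there. For `q ≤ 6` all zeros of `μ`
lie outside the closed unit disc, so some multiple of `μ` has such a dominant constant coefficient;
exhibiting one multiple for each `q` proves the stability without locating any zeros.
-/

open Finset Polynomial

universe u

section Contraction

variable {𝕜 : Type*} [NormedField 𝕜] {E : Type*} [AddCommGroup E] [Module 𝕜 E] {N : Seminorm 𝕜 E}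
  {T : Module.End 𝕜 E}

theorem seminorm_pow_apply_le (hT : ∀ x, N (T x) ≤ N x) (j : ℕ) (x : E) :
    N ((T ^ j) x) ≤ N x := by
  induction j with
  | zero => simp
  | succ j ih =>
    rw [pow_succ', Module.End.mul_apply]
    exact (hT _).trans ih

theorem seminorm_sum_smul_pow_apply_le {ι : Type*} (hT : ∀ x, N (T x) ≤ N x) (s : Finset ι)
    (c : ι → 𝕜) (e : ι → ℕ) (x : E) :
    N (∑ i ∈ s, c i • (T ^ e i) x) ≤ (∑ i ∈ s, ‖c i‖) * N x :=
  calc N (∑ i ∈ s, c i • (T ^ e i) x)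
      ≤ ∑ i ∈ s, N (c i • (T ^ e i) x) :=
        le_sum_of_subadditive N (map_zero N).le (map_add_le_add N) _ _
    _ ≤ ∑ i ∈ s, ‖c i‖ * N x := by
        gcongr with i
        rw [map_smul_eq_mul]
        gcongr
        exact seminorm_pow_apply_le hT _ _
    _ = (∑ i ∈ s, ‖c i‖) * N x := (sum_mul ..).symm

theorem seminorm_aeval_apply_le (hT : ∀ x, N (T x) ≤ N x) (p : 𝕜[X]) (x : E) :
    N (aeval T p x) ≤ (∑ i ∈ p.support, ‖p.coeff i‖) * N x := by
  simpa [aeval_def, eval₂_eq_sum, Polynomial.sum, Module.algebraMap_end_apply] using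
    seminorm_sum_smul_pow_apply_le hT p.support p.coeff id x

/-- Some polynomial multiple of `p` has a constant coefficient larger in norm than all its other
coefficients together. It is the algebraic certificate of stability used here; `c i` is the
coefficient of `X ^ (i + 1)`. -/
def HasDominantMultiple (p : 𝕜[X]) : Prop :=
  ∃ (r : 𝕜[X]) (a : 𝕜) (m : ℕ) (c : Fin m → 𝕜),
    r * p = C a + ∑ i, C (c i) * X ^ (i + 1 : ℕ) ∧ ∑ i, ‖c i‖ < ‖a‖

theorem HasDominantMultiple.exists_seminorm_le {p : 𝕜[X]} (h : HasDominantMultiple p) :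
    ∃ K : ℝ, 0 ≤ K ∧ ∀ {E : Type u} [AddCommGroup E] [Module 𝕜 E] {N : Seminorm 𝕜 E}
      {T : Module.End 𝕜 E}, (∀ x, N (T x) ≤ N x) → ∀ x, N x ≤ K * N (aeval T p x) := by
  obtain ⟨r, a, m, c, hrp, hca⟩ := h
  have hgap : 0 < ‖a‖ - ∑ i, ‖c i‖ := sub_pos.2 hca
  refine ⟨(∑ i ∈ r.support, ‖r.coeff i‖) / (‖a‖ - ∑ i, ‖c i‖), by positivity,
    fun {E} _ _ {N T} hT x => ?_⟩
  rw [div_mul_eq_mul_div, le_div_iff₀ hgap, mul_comm, sub_mul, sub_le_iff_le_add]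
  set tail := ∑ i, c i • (T ^ (i + 1 : ℕ)) x
  have hax : a • x = aeval T r (aeval T p x) - tail := by
    rw [← Module.End.mul_apply, ← map_mul, hrp, eq_sub_iff_add_eq]
    simp [tail, Module.algebraMap_end_apply]
  calc ‖a‖ * N x = N (aeval T r (aeval T p x) - tail) := by rw [← map_smul_eq_mul, hax]
    _ ≤ N (aeval T r (aeval T p x)) + N tail := map_sub_le_add N _ _
    _ ≤ (∑ i ∈ r.support, ‖r.coeff i‖) * N (aeval T p x) + (∑ i, ‖c i‖) * N x :=
        add_le_add (seminorm_aeval_apply_le hT r _)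
          (seminorm_sum_smul_pow_apply_le hT univ c _ x)

end Contraction

section RightShift

/-- The right shift of sequences, inserting `0` at index `0`. -/
def rightShift (R H : Type*) [Semiring R] [AddCommMonoid H] [Module R H] :
    Module.End R (ℕ → H) where
  toFun
    | _, 0 => 0
    | d, k + 1 => d k
  map_add' d e := by ext (_ | k) <;> simp
  map_smul' c d := by ext (_ | k) <;> simp

variable {R H : Type*} [CommSemiring R] [AddCommMonoid H] [Module R H]

@[simp]
theorem rightShift_apply_zero (d : ℕ → H) : rightShift R H d 0 = 0 := rfl

@[simp]
theorem rightShift_apply_succ (d : ℕ → H) (k : ℕ) : rightShift R H d (k + 1) = d k := rfl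

theorem rightShift_pow_apply_of_le (d : ℕ → H) {j k : ℕ} (h : j ≤ k) :
    (rightShift R H ^ j) d k = d (k - j) := by
  induction j generalizing k with
  | zero => simp
  | succ j ih =>
    obtain ⟨k, rfl⟩ := Nat.exists_eq_add_one_of_ne_zero (by omega : k ≠ 0)
    rw [pow_succ', Module.End.mul_apply, rightShift_apply_succ, ih (by omega),
      Nat.add_sub_add_right]

theorem aeval_rightShift_sum_apply_of_le (c : ℕ → R) (d : ℕ → H) {q k : ℕ} (h : q ≤ k) :
    aeval (rightShift R H) (∑ j ∈ range (q + 1), C (c j) * X ^ j) d k =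
      ∑ j ∈ range (q + 1), c j • d (k - j) := by
  simp only [map_sum, map_mul, aeval_C, map_pow, aeval_X, LinearMap.sum_apply, Finset.sum_apply,
    Module.End.mul_apply, Module.algebraMap_end_apply, Pi.smul_apply]
  refine sum_congr rfl fun j hj => ?_
  rw [rightShift_pow_apply_of_le d (by grind)]

end RightShift

section BackwardDifference

variable {R H : Type*} [CommRing R] [AddCommGroup H] [Module R H]

/-- The shift inserts `0` at index `0`, whereas `a (0 - 1) = a 0` by truncated subtraction;
subtracting `a 0` from the sequence reconciles the two. -/
theorem aeval_rightShift_one_sub_X (a : ℕ → H) :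
    aeval (rightShift R H) (1 - X : R[X]) (fun k => a k - a 0) = fun k => a k - a (k - 1) := by
  ext (_ | k) <;> simp

theorem aeval_rightShift_backwardDiff_apply {c : ℕ → R} {q k : ℕ} {μ : R[X]}
    (hμ : ∑ j ∈ range (q + 1), C (c j) * X ^ j = μ * (1 - X)) (hk : q ≤ k) (a : ℕ → H) :
    aeval (rightShift R H) μ (fun k => a k - a (k - 1)) k =
      ∑ j ∈ range (q + 1), c j • a (k - j) := by
  have hsum : ∑ j ∈ range (q + 1), c j = 0 := by
    simpa [eval_finsetSum] using congrArg (eval 1) hμ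
  rw [← aeval_rightShift_one_sub_X (R := R), ← Module.End.mul_apply, ← map_mul, ← hμ,
    aeval_rightShift_sum_apply_of_le c _ hk]
  simp_rw [smul_sub, sum_sub_distrib, ← sum_smul, hsum, zero_smul, sub_zero]

end BackwardDifference

section TruncSeminorm

variable {𝕜 : Type*} [NormedField 𝕜] {H : Type*} [SeminormedAddCommGroup H] [NormedSpace 𝕜 H]
  {p : ℝ}

/-- The `ℓᵖ` seminorm of the first `n` terms of a sequence. -/
noncomputable def truncSeminorm (𝕜 H : Type*) [NormedField 𝕜] [SeminormedAddCommGroup H]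
    [NormedSpace 𝕜 H] (hp : 1 ≤ p) (n : ℕ) : Seminorm 𝕜 (ℕ → H) :=
  haveI : Fact (1 ≤ ENNReal.ofReal p) := ⟨ENNReal.one_le_ofReal.2 hp⟩
  (normSeminorm 𝕜 (PiLp (ENNReal.ofReal p) fun _ : Fin n => H)).comp
    ((WithLp.linearEquiv _ 𝕜 (Fin n → H)).symm.toLinearMap ∘ₗ LinearMap.funLeft 𝕜 H Fin.val)

theorem truncSeminorm_rpow (hp : 1 ≤ p) (n : ℕ) (d : ℕ → H) :
    truncSeminorm 𝕜 H hp n d ^ p = ∑ k ∈ range n, ‖d k‖ ^ p := by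
  have hp0 : 0 < p := by linarith
  have hp' : (ENNReal.ofReal p).toReal = p := ENNReal.toReal_ofReal hp0.le
  rw [truncSeminorm, Seminorm.comp_apply, coe_normSeminorm, PiLp.norm_eq_sum (by rwa [hp']), hp',
    one_div, Real.rpow_inv_rpow (sum_nonneg fun _ _ => by positivity) hp0.ne', sum_range]
  rfl

theorem truncSeminorm_rightShift_le (hp : 1 ≤ p) (n : ℕ) (d : ℕ → H) :
    truncSeminorm 𝕜 H hp n (rightShift 𝕜 H d) ≤ truncSeminorm 𝕜 H hp n d := by
  have hp0 : 0 < p := by linarith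
  rw [← Real.rpow_le_rpow_iff (apply_nonneg _ _) (apply_nonneg _ _) hp0, truncSeminorm_rpow,
    truncSeminorm_rpow]
  cases n with
  | zero => simp
  | succ n =>
    rw [sum_range_succ', sum_range_succ]
    simp only [rightShift_apply_succ, rightShift_apply_zero, norm_zero, Real.zero_rpow hp0.ne']
    gcongr
    positivity

theorem sum_norm_rpow_le_of_truncSeminorm_le (hp : 1 ≤ p) {K : ℝ} (hK : 0 ≤ K) {n : ℕ}
    {d e : ℕ → H} (h : truncSeminorm 𝕜 H hp n d ≤ K * truncSeminorm 𝕜 H hp n e) :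
    ∑ k ∈ range n, ‖d k‖ ^ p ≤ K ^ p * ∑ k ∈ range n, ‖e k‖ ^ p := by
  rw [← truncSeminorm_rpow (𝕜 := 𝕜) hp, ← truncSeminorm_rpow (𝕜 := 𝕜) hp,
    ← Real.mul_rpow hK (apply_nonneg _ _)]
  exact Real.rpow_le_rpow (apply_nonneg _ _) h (by linarith)

theorem HasDominantMultiple.exists_sum_Ico_norm_rpow_le {μ : 𝕜[X]} (h : HasDominantMultiple μ)
    (hp : 1 ≤ p) :
    ∃ c : ℝ, 0 < c ∧ ∀ (H : Type u) [SeminormedAddCommGroup H] [NormedSpace 𝕜 H] {m n : ℕ},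
      m ≤ n → ∀ d : ℕ → H,
        ∑ k ∈ Ico m n, ‖d k‖ ^ p ≤
          c * ∑ k ∈ Ico m n, ‖aeval (rightShift 𝕜 H) μ d k‖ ^ p +
            c * ∑ k ∈ range m, ‖d k‖ ^ p := by
  obtain ⟨A, hA, hlower⟩ := h.exists_seminorm_le
  set B := ∑ i ∈ μ.support, ‖μ.coeff i‖
  have hB : 0 ≤ B := sum_nonneg fun _ _ => norm_nonneg _
  refine ⟨A ^ p + A ^ p * B ^ p + 1, by positivity, fun H _ _ m n hmn d => ?_⟩
  set f := aeval (rightShift 𝕜 H) μ d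
  have hd : ∑ k ∈ range n, ‖d k‖ ^ p ≤ A ^ p * ∑ k ∈ range n, ‖f k‖ ^ p :=
    sum_norm_rpow_le_of_truncSeminorm_le hp hA (hlower (truncSeminorm_rightShift_le hp n) d)
  have hf : ∑ k ∈ range m, ‖f k‖ ^ p ≤ B ^ p * ∑ k ∈ range m, ‖d k‖ ^ p :=
    sum_norm_rpow_le_of_truncSeminorm_le hp hB
      (seminorm_aeval_apply_le (truncSeminorm_rightShift_le hp m) μ d)
  rw [← sum_range_add_sum_Ico _ hmn, ← sum_range_add_sum_Ico _ hmn] at hd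
  set D₀ := ∑ k ∈ range m, ‖d k‖ ^ p
  set F := ∑ k ∈ Ico m n, ‖f k‖ ^ p
  have hD₀ : 0 ≤ D₀ := sum_nonneg fun _ _ => by positivity
  have hF : 0 ≤ F := sum_nonneg fun _ _ => by positivity
  calc ∑ k ∈ Ico m n, ‖d k‖ ^ p ≤ A ^ p * F + A ^ p * B ^ p * D₀ := by
        linarith [mul_le_mul_of_nonneg_left hf (Real.rpow_nonneg hA p)]
    _ ≤ (A ^ p + A ^ p * B ^ p + 1) * F + (A ^ p + A ^ p * B ^ p + 1) * D₀ :=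
        add_le_add
          (mul_le_mul_of_nonneg_right (by linarith [show 0 ≤ A ^ p * B ^ p by positivity]) hF)
          (mul_le_mul_of_nonneg_right (by linarith [show 0 ≤ A ^ p by positivity]) hD₀)

end TruncSeminorm

theorem sum_range_norm_backwardDiff_rpow {H : Type*} [SeminormedAddCommGroup H] {p : ℝ}
    (hp : p ≠ 0) (q : ℕ) (a : ℕ → H) :
    ∑ k ∈ range q, ‖a k - a (k - 1)‖ ^ p = ∑ k ∈ Icc 1 (q - 1), ‖a k - a (k - 1)‖ ^ p := by
  symm
  refine sum_subset (fun k hk => by grind) fun k hk hk' => ?_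
  obtain rfl : k = 0 := by grind
  simp [Real.zero_rpow hp]

/-- The quotient `μ(ζ) = δ(ζ) / (1 - ζ)` of the `q`-step BDF generating polynomial. -/
noncomputable def bdfQuotient (q : ℕ) : ℝ[X] :=
  ∑ l ∈ Icc 1 q, C (1 / (l : ℝ)) * (1 - X) ^ (l - 1)

theorem bdfQuotient_mul_one_sub_X {q : ℕ} {δ : ℕ → ℝ}
    (hδ : ∀ ζ : ℝ, ∑ j ∈ range (q + 1), δ j * ζ ^ j =
      ∑ l ∈ Icc 1 q, (1 / (l : ℝ)) * (1 - ζ) ^ l) :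
    ∑ j ∈ range (q + 1), C (δ j) * X ^ j = bdfQuotient q * (1 - X) := by
  refine Polynomial.funext fun ζ => ?_
  simp only [bdfQuotient, eval_finsetSum, eval_mul, eval_C, eval_pow, eval_sub, eval_one, eval_X,
    hδ, sum_mul, mul_assoc]
  refine sum_congr rfl fun l hl => ?_
  rw [pow_sub_one_mul (by grind)]

/-- The multipliers come from minimizing the sum of the absolute values of the non-constant
coefficients of the product, for a fixed constant coefficient, and rounding to integers. -/
theorem hasDominantMultiple_bdfQuotient {q : ℕ} (hq1 : 1 ≤ q) (hq6 : q ≤ 6) :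
    HasDominantMultiple (bdfQuotient q) := by
  interval_cases q <;>
    [use 1, 1, 0, ![];
     use C 2, 3, 1, ![-1];
     use C 6, 11, 2, ![-7, 2];
     use C 12 * (2 + X), 50, 4, ![-21, 3, 7, -3];
     use C 60 * (2 + 2 * X + X ^ 2), 274, 6, ![-52, 85, -15, 35, -39, 12];
     use C 60 * (4 + 6 * X + 4 * X ^ 2 + X ^ 3), 588, 8, ![30, 258, 65, 5, -83, 25, 22, -10]]
  all_goals
    refine ⟨Polynomial.funext fun ζ => ?_, ?_⟩
    · simp only [bdfQuotient, eval_mul, eval_C, eval_add, eval_sub, eval_pow, eval_X, eval_one,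
        eval_ofNat, sum_Icc_succ_top, Icc_self, sum_singleton, Fin.sum_univ_succ,
        Fin.sum_univ_zero, eval_zero, Matrix.cons_val_zero, Matrix.cons_val_succ, Fin.val_succ,
        Fin.val_zero, Nat.one_le_ofNat, Nat.reduceAdd, Nat.reduceSub, Nat.cast_one,
        Nat.cast_ofNat]
      ring
    · norm_num [Fin.sum_univ_succ]

theorem bdf_zero_stability_partial_bound_general
    (q : ℕ) (hq1 : 1 ≤ q) (hq6 : q ≤ 6) (δ : ℕ → ℝ)
    (hδ : ∀ ζ : ℝ, ∑ j ∈ range (q + 1), δ j * ζ ^ j =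
      ∑ l ∈ Icc 1 q, (1 / (l : ℝ)) * (1 - ζ) ^ l)
    {p : ℝ} (hp : 1 ≤ p) :
    ∃ c : ℝ, 0 < c ∧
      ∀ (H : Type*) [SeminormedAddCommGroup H] [NormedSpace ℝ H],
      ∀ τ : ℝ, 0 < τ → ∀ n : ℕ, q ≤ n → ∀ a : ℕ → H,
        ∑ k ∈ Icc q n, ‖τ⁻¹ • (a k - a (k - 1))‖ ^ p ≤
          c * ∑ k ∈ Icc q n, ‖τ⁻¹ • ∑ j ∈ range (q + 1), δ j • a (k - j)‖ ^ p +
            c * ∑ i ∈ Icc 1 (q - 1), ‖τ⁻¹ • (a i - a (i - 1))‖ ^ p := by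
  obtain ⟨c, hc, hbound⟩ :=
    (hasDominantMultiple_bdfQuotient hq1 hq6).exists_sum_Ico_norm_rpow_le hp
  refine ⟨c, hc, fun H _ _ τ _ n hn a => ?_⟩
  have hdiff (k : ℕ) : τ⁻¹ • (a k - a (k - 1)) = τ⁻¹ • a k - τ⁻¹ • a (k - 1) := smul_sub ..
  have hderiv : ∀ k ∈ Icc q n, τ⁻¹ • ∑ j ∈ range (q + 1), δ j • a (k - j) =
      aeval (rightShift ℝ H) (bdfQuotient q) (fun k => τ⁻¹ • a k - τ⁻¹ • a (k - 1)) k := by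
    intro k hk
    rw [aeval_rightShift_backwardDiff_apply (bdfQuotient_mul_one_sub_X hδ) (mem_Icc.1 hk).1
      (fun k => τ⁻¹ • a k), smul_sum]
    exact sum_congr rfl fun j _ => smul_comm ..
  have hsum : ∑ k ∈ Icc q n, ‖τ⁻¹ • ∑ j ∈ range (q + 1), δ j • a (k - j)‖ ^ p = ∑ k ∈ Icc q n,
      ‖aeval (rightShift ℝ H) (bdfQuotient q) (fun k => τ⁻¹ • a k - τ⁻¹ • a (k - 1)) k‖ ^ p :=
    sum_congr rfl fun k hk => by rw [hderiv k hk]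
  rw [hsum]
  simp_rw [hdiff]
  rw [← sum_range_norm_backwardDiff_rpow (by linarith) q fun k => τ⁻¹ • a k,
    ← Ico_add_one_right_eq_Icc]
  exact hbound H (by omega) _

/-- **Zero-stability bound for BDF methods (`q ≤ 6`).**
With `δ_0, …, δ_q` the `q`-step BDF coefficients (`Σ_j δ_j ζ^j = Σ_{l=1}^q (1/l)(1−ζ)^l`),
there is a constant `c > 0` depending only on `q` such that for every normed real vector
space `H`, every `τ > 0`, every `n ≥ q` and every sequence `(a^k)` in `H`,
`Σ_{k=q}^n ‖∂^τ a^k‖² ≤ c Σ_{k=q}^n ‖∂^τ_q a^k‖² + c Σ_{i=1}^{q−1} ‖∂^τ a^i‖²`,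
where `∂^τ a^k = (a^k − a^{k−1})/τ` and `∂^τ_q a^k = (1/τ) Σ_{j=0}^q δ_j a^{k−j}`. -/
theorem bdf_zero_stability_partial_bound
    (q : ℕ) (hq1 : 1 ≤ q) (hq6 : q ≤ 6) (δ : ℕ → ℝ)
    (hδ : ∀ ζ : ℝ, ∑ j ∈ Finset.range (q + 1), δ j * ζ ^ j
        = ∑ l ∈ Finset.Icc 1 q, (1 / (l : ℝ)) * (1 - ζ) ^ l) :
    ∃ c : ℝ, 0 < c ∧
      ∀ (H : Type*) [NormedAddCommGroup H] [NormedSpace ℝ H],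
      ∀ τ : ℝ, 0 < τ → ∀ n : ℕ, q ≤ n → ∀ a : ℕ → H,
        ∑ k ∈ Finset.Icc q n, ‖τ⁻¹ • (a k - a (k - 1))‖ ^ 2
          ≤ c * ∑ k ∈ Finset.Icc q n,
                ‖τ⁻¹ • ∑ j ∈ Finset.range (q + 1), δ j • a (k - j)‖ ^ 2
            + c * ∑ i ∈ Finset.Icc 1 (q - 1), ‖τ⁻¹ • (a i - a (i - 1))‖ ^ 2 := by
  obtain ⟨c, hc, h⟩ := bdf_zero_stability_partial_bound_general q hq1 hq6 δ hδ one_le_two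
  exact ⟨c, hc, fun H _ _ => by simpa using h H⟩
end

section
/- Fix an integer q with 1 ≤ q ≤ 5 and let δ_0, …, δ_q be the q-step BDF coefficients defined by Σ_{j=0}^q δ_j ζ^j = Σ_{l=1}^q (1/l)(1−ζ)^l. Let 1 ≤ p ≤ q, let T > 0, τ > 0, and let y : [0,T] → ℝ be (p+1) times continuously differentiable. Then for every t* ∈ [qτ, T]: (1/τ) Σ_{i=0}^q δ_i y(t* − iτ) − y′(t*) = τ^p ∫_0^q K_q(s) y^{(p+1)}(t* − sτ) ds, where K_q(s) = −(1/p!) Σ_{i=0}^q δ_i ((s−i)_−)^p and (x)_− equals x for x ≤ 0 and 0 for x ≥ 0. -/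
/-!
Replace each `y (t - i τ)` by its Taylor polynomial at `t` of degree `p` plus the integral
remainder. In the variable `u = t - s τ` the remainder is an integral against the truncated power
`(s - i)₋ ^ p`, so weighting by the `δ i` and summing produces the Peano kernel. The weighted Taylor
polynomials sum to `τ y' t` as soon as `∑ i, δ i (-i) ^ k` is `1` for `k = 1` and `0` for the other
`k ≤ p`. For the BDF polynomial `P = ∑ l, (1 - X) ^ l / l` these moment conditions hold for all
`k ≤ q`, because `X P' = (1 - X) ^ q - 1`: the weights `i δ i`, `i ≥ 1`, are those of a `q`-th
finite difference, which annihilates polynomials of degree less than `q`.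
-/

open Set
open scoped Nat

/-- The backward difference formula `τ⁻¹ • ∑ i ≤ q, δ i • y (t - i τ)` for `y' t` has order at least
`p`: it is exact for polynomials of degree at most `p`. By translation and scaling this is required
only of the monomials, at `t = 0` and with `τ = 1`. -/
def IsBackwardDifferenceOfOrder {R : Type*} [Ring R] (p q : ℕ) (δ : ℕ → R) : Prop :=
  ∀ k ≤ p, ∑ i ∈ Finset.range (q + 1), δ i * (-(i : R)) ^ k = if k = 1 then 1 else 0

/-- The Peano kernel of order `p` of the functional `y ↦ ∑ i ≤ q, δ i • y (t - i τ)`, as a function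
of `s = (t - u) / τ`. The negative part is taken with its sign: `x₋ = min x 0`. -/
noncomputable def peanoKernel (p q : ℕ) (δ : ℕ → ℝ) (s : ℝ) : ℝ :=
  -(1 / (p ! : ℝ)) * ∑ i ∈ Finset.range (q + 1), δ i * min (s - i) 0 ^ p

section BDF

open Polynomial

theorem sum_coeff_one_sub_X_pow_mul_pow {R : Type*} [CommRing R] {m n : ℕ} (hmn : m < n) :
    ∑ i ∈ Finset.range (n + 1), ((1 - X : R[X]) ^ n).coeff i * (i : R) ^ m = 0 := by
  have hcoeff (i : ℕ) :
      ((1 - X : R[X]) ^ n).coeff i = (-1) ^ n * ((-1) ^ (n - i) * (n.choose i : R)) := by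
    have hneg : (1 - X : R[X]) = C (-1) * (X + C (-1)) := by
      simp [sub_eq_add_neg, add_comm]
    rw [hneg, mul_pow, ← C_pow, coeff_C_mul, coeff_X_add_C_pow]
  have hdiff := congrFun (fwdDiff_iter_pow_eq_zero_of_lt (R := R) hmn) 0
  rw [fwdDiff_iter_eq_sum_shift] at hdiff
  simp only [hcoeff, mul_assoc ((-1 : R) ^ n), ← Finset.mul_sum]
  rw [show ∑ i ∈ Finset.range (n + 1), (-1) ^ (n - i) * (n.choose i : R) * (i : R) ^ m = 0 by
    simpa using hdiff, mul_zero]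

/-- The generating polynomial of the coefficients of the `q`-step backward differentiation
formula. -/
noncomputable def bdfPolynomial (K : Type*) [Field K] (q : ℕ) : K[X] :=
  ∑ l ∈ Finset.Icc 1 q, C (1 / (l : K)) * (1 - X) ^ l

theorem X_mul_derivative_bdfPolynomial (K : Type*) [Field K] [CharZero K] (q : ℕ) :
    X * derivative (bdfPolynomial K q) = (1 - X) ^ q - 1 := by
  induction q with
  | zero => simp [bdfPolynomial]
  | succ q ih =>
    have hlast : derivative (C (1 / ((q + 1 : ℕ) : K)) * (1 - X) ^ (q + 1)) = -(1 - X) ^ q := by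
      have hinv : C (1 / ((q + 1 : ℕ) : K)) * C ((q + 1 : ℕ) : K) = 1 := by
        rw [← C_mul, one_div_mul_cancel (Nat.cast_ne_zero.2 q.succ_ne_zero), C_1]
      rw [derivative_C_mul, derivative_pow, Nat.add_sub_cancel, derivative_sub, derivative_one,
        derivative_X]
      linear_combination -(1 - X) ^ q * hinv
    rw [bdfPolynomial, Finset.sum_Icc_succ_top (by lia), ← bdfPolynomial, derivative_add, hlast,
      mul_add, ih]
    ring

theorem coeff_bdfPolynomial_eq {K : Type*} [Field K] [Infinite K] {q : ℕ} {δ : ℕ → K}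
    (hδ : ∀ ζ : K, ∑ j ∈ Finset.range (q + 1), δ j * ζ ^ j
      = ∑ l ∈ Finset.Icc 1 q, (1 / (l : K)) * (1 - ζ) ^ l) {i : ℕ} (hi : i ≤ q) :
    (bdfPolynomial K q).coeff i = δ i := by
  have hpoly : bdfPolynomial K q = ∑ j ∈ Finset.range (q + 1), C (δ j) * X ^ j :=
    Polynomial.funext fun ζ ↦ by simpa [bdfPolynomial, eval_finsetSum] using (hδ ζ).symm
  simp [hpoly, finsetSum_coeff, coeff_C_mul, coeff_X_pow, Nat.lt_succ_iff.2 hi]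

theorem isBackwardDifferenceOfOrder_bdf {K : Type*} [Field K] [CharZero K] {q : ℕ} {δ : ℕ → K}
    (hδ : ∀ ζ : K, ∑ j ∈ Finset.range (q + 1), δ j * ζ ^ j
      = ∑ l ∈ Finset.Icc 1 q, (1 / (l : K)) * (1 - ζ) ^ l) :
    IsBackwardDifferenceOfOrder q q δ := by
  rintro (_ | m) hm
  · have hone : ∑ l ∈ Finset.Icc 1 q, (1 / (l : K)) * (1 - 1) ^ l = 0 :=
      Finset.sum_eq_zero fun l hl ↦ by
        rw [sub_self, zero_pow (by grind), mul_zero]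
    simpa using (hδ 1).trans hone
  · have hweight (i : ℕ) (hi : i ∈ Finset.range (q + 1)) :
        δ i * i = ((1 - X : K[X]) ^ q - 1).coeff i := by
      rw [← coeff_bdfPolynomial_eq hδ (Finset.mem_range_succ_iff.1 hi),
        ← X_mul_derivative_bdfPolynomial]
      cases i <;> simp [coeff_X_mul, coeff_derivative]
    calc ∑ i ∈ Finset.range (q + 1), δ i * (-(i : K)) ^ (m + 1)
        = (-1) ^ (m + 1) * ∑ i ∈ Finset.range (q + 1), δ i * i * (i : K) ^ m := by
          rw [Finset.mul_sum]
          exact Finset.sum_congr rfl fun i _ ↦ by rw [neg_pow]; ring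
      _ = (-1) ^ (m + 1) * (∑ i ∈ Finset.range (q + 1), ((1 - X : K[X]) ^ q).coeff i * (i : K) ^ m
            - ∑ i ∈ Finset.range (q + 1), (1 : K[X]).coeff i * (i : K) ^ m) := by
          rw [← Finset.sum_sub_distrib]
          congr 1
          exact Finset.sum_congr rfl fun i hi ↦ by rw [hweight i hi, coeff_sub, sub_mul]
      _ = if m + 1 = 1 then 1 else 0 := by
          rw [sum_coeff_one_sub_X_pow_mul_pow (Nat.lt_of_succ_le hm)]
          rcases m with _ | m <;> simp [coeff_one, Finset.sum_ite_eq']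

end BDF

section Remainder

variable {E : Type*} [NormedAddCommGroup E] [NormedSpace ℝ E]

theorem taylor_integral_remainder_of_uIcc_subset [CompleteSpace E] {f : ℝ → E} {S : Set ℝ}
    {x x₀ : ℝ} {n : ℕ} (hS : UniqueDiffOn ℝ S) (hf : ContDiffOn ℝ (n + 1) f S)
    (hsub : uIcc x₀ x ⊆ S) :
    f x - taylorWithinEval f n S x₀ x =
      ∫ u in x₀..x, ((x - u) ^ n / n !) • iteratedDerivWithin (n + 1) f S u := by
  rcases eq_or_ne x₀ x with rfl | hne
  · simp
  have hderiv {k : ℕ} (hk : k ≤ n + 1) {u : ℝ} (hu : u ∈ uIcc x₀ x) :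
      iteratedDerivWithin k f (uIcc x₀ x) u = iteratedDerivWithin k f S u := by
    simp only [iteratedDerivWithin, iteratedFDerivWithin_subset hsub (uniqueDiffOn_uIcc hne) hS
      (hf.of_le (by exact_mod_cast hk)) hu]
  have htaylor : taylorWithinEval f n (uIcc x₀ x) x₀ x = taylorWithinEval f n S x₀ x := by
    simp only [taylor_within_apply]
    exact Finset.sum_congr rfl fun k hk ↦ by
      rw [hderiv (Finset.mem_range.1 hk).le left_mem_uIcc]
  rw [← htaylor, taylor_integral_remainder (mod_cast hf.mono hsub)]
  exact intervalIntegral.integral_congr fun u hu ↦ by simp only [hderiv le_rfl hu]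

theorem sub_mul_mem_uIcc {s r : ℝ} (t τ : ℝ) (hs : s ∈ Icc 0 r) :
    t - s * τ ∈ uIcc (t - r * τ) t := by
  rw [mem_uIcc]
  rcases le_total 0 τ with hτ | hτ
  · left
    constructor <;> nlinarith [hs.1, hs.2]
  · right
    constructor <;> nlinarith [hs.1, hs.2]

theorem integral_min_pow_smul {c r : ℝ} {p : ℕ} (hp : p ≠ 0) (hc : c ∈ Icc 0 r) {g : ℝ → E}
    (hg : IntervalIntegrable g MeasureTheory.volume 0 r) :
    ∫ s in 0..r, (min (s - c) 0 ^ p) • g s = ∫ s in 0..c, ((s - c) ^ p) • g s := by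
  have hint : IntervalIntegrable (fun s ↦ (min (s - c) 0 ^ p) • g s) MeasureTheory.volume 0 r :=
    hg.continuousOn_smul (by fun_prop)
  have hc' : c ∈ uIcc 0 r := Icc_subset_uIcc hc
  have hright : ∫ s in c..r, (min (s - c) 0 ^ p) • g s = 0 := by
    refine intervalIntegral.integral_zero_ae (.of_forall fun s hs ↦ ?_)
    rw [uIoc_of_le hc.2] at hs
    rw [min_eq_right (sub_nonneg.2 hs.1.le), zero_pow hp, zero_smul]
  rw [← intervalIntegral.integral_add_adjacent_intervals
    (hint.mono_set (uIcc_subset_uIcc_left hc')) (hint.mono_set (uIcc_subset_uIcc_right hc')),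
    hright, add_zero]
  refine intervalIntegral.integral_congr fun s hs ↦ ?_
  rw [uIcc_of_le hc.1] at hs
  simp only [min_eq_left (sub_nonpos.2 hs.2)]

variable {y : ℝ → E} {S : Set ℝ} {p : ℕ} {t τ : ℝ}

theorem intervalIntegrable_iteratedDerivWithin_sub_mul {r : ℝ} (hr : 0 ≤ r)
    (hS : UniqueDiffOn ℝ S) (hy : ContDiffOn ℝ p y S) (hsub : uIcc (t - r * τ) t ⊆ S) :
    IntervalIntegrable (fun s ↦ iteratedDerivWithin p y S (t - s * τ))
      MeasureTheory.volume 0 r := by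
  refine ContinuousOn.intervalIntegrable ?_
  rw [uIcc_of_le hr]
  exact (hy.continuousOn_iteratedDerivWithin le_rfl hS).comp (by fun_prop)
    fun s hs ↦ hsub (sub_mul_mem_uIcc t τ hs)

theorem taylor_remainder_eq_integral_min_pow [CompleteSpace E] {c r : ℝ} (hp : p ≠ 0)
    (hc : c ∈ Icc 0 r) (hS : UniqueDiffOn ℝ S) (hy : ContDiffOn ℝ (p + 1) y S)
    (hsub : uIcc (t - r * τ) t ⊆ S) :
    y (t - c * τ) - taylorWithinEval y p S t (t - c * τ) =
      τ ^ (p + 1) • ∫ s in 0..r, (-(1 / (p ! : ℝ)) * min (s - c) 0 ^ p) •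
        iteratedDerivWithin (p + 1) y S (t - s * τ) := by
  have hint := intervalIntegrable_iteratedDerivWithin_sub_mul (p := p + 1) (hc.1.trans hc.2) hS
    (mod_cast hy) hsub
  have hsubc : uIcc t (t - c * τ) ⊆ S :=
    (uIcc_subset_uIcc right_mem_uIcc (sub_mul_mem_uIcc t τ hc)).trans hsub
  calc y (t - c * τ) - taylorWithinEval y p S t (t - c * τ)
      = ∫ u in t..(t - c * τ),
          ((t - c * τ - u) ^ p / p !) • iteratedDerivWithin (p + 1) y S u :=
        taylor_integral_remainder_of_uIcc_subset hS hy hsubc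
    _ = -(τ • ∫ s in 0..c,
          ((t - c * τ - (t - τ * s)) ^ p / p !) • iteratedDerivWithin (p + 1) y S (t - τ * s)) := by
        rw [intervalIntegral.smul_integral_comp_sub_mul
            (fun u ↦ ((t - c * τ - u) ^ p / p !) • iteratedDerivWithin (p + 1) y S u),
          mul_zero, sub_zero, mul_comm τ c, intervalIntegral.integral_symm]
    _ = τ ^ (p + 1) • -(1 / (p ! : ℝ)) • ∫ s in 0..c,
          ((s - c) ^ p) • iteratedDerivWithin (p + 1) y S (t - s * τ) := by
        simp only [← intervalIntegral.integral_smul, ← intervalIntegral.integral_neg, smul_smul,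
          ← neg_smul]
        refine intervalIntegral.integral_congr fun s _ ↦ ?_
        simp only [mul_comm τ s]
        congr 1
        rw [show t - c * τ - (t - s * τ) = τ * (s - c) by ring, mul_pow]
        ring
    _ = _ := by
        simp only [mul_smul, intervalIntegral.integral_smul, integral_min_pow_smul hp hc hint]

theorem integral_peanoKernel_smul {q : ℕ} (δ : ℕ → ℝ) {g : ℝ → E} {a b : ℝ}
    (hg : IntervalIntegrable g MeasureTheory.volume a b) :
    ∫ s in a..b, peanoKernel p q δ s • g s = ∑ i ∈ Finset.range (q + 1),
      δ i • ∫ s in a..b, (-(1 / (p ! : ℝ)) * min (s - i) 0 ^ p) • g s := by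
  have hint (i : ℕ) : IntervalIntegrable
      (fun s ↦ δ i • (-(1 / (p ! : ℝ)) * min (s - i) 0 ^ p) • g s) MeasureTheory.volume a b :=
    (hg.continuousOn_smul (by fun_prop)).smul (δ i)
  simp only [← intervalIntegral.integral_smul]
  rw [← intervalIntegral.integral_finsetSum fun i _ ↦ hint i]
  simp only [peanoKernel, Finset.mul_sum, Finset.sum_smul, smul_smul, mul_left_comm]

theorem sum_smul_sub_taylorWithinEval_eq_integral_peanoKernel [CompleteSpace E] {q : ℕ}
    (δ : ℕ → ℝ) (hp : p ≠ 0) (hS : UniqueDiffOn ℝ S) (hy : ContDiffOn ℝ (p + 1) y S)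
    (hsub : uIcc (t - q * τ) t ⊆ S) :
    ∑ i ∈ Finset.range (q + 1), δ i • (y (t - i * τ) - taylorWithinEval y p S t (t - i * τ)) =
      τ ^ (p + 1) • ∫ s in (0 : ℝ)..q,
        peanoKernel p q δ s • iteratedDerivWithin (p + 1) y S (t - s * τ) := by
  rw [integral_peanoKernel_smul δ (intervalIntegrable_iteratedDerivWithin_sub_mul
    (p := p + 1) q.cast_nonneg hS (mod_cast hy) hsub), Finset.smul_sum]
  refine Finset.sum_congr rfl fun i hi ↦ ?_
  have hiq : (i : ℝ) ∈ Icc (0 : ℝ) q :=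
    ⟨i.cast_nonneg, mod_cast Finset.mem_range_succ_iff.1 hi⟩
  rw [taylor_remainder_eq_integral_min_pow hp hiq hS hy hsub, smul_comm]

theorem IsBackwardDifferenceOfOrder.sum_smul_taylorWithinEval {q : ℕ} {δ : ℕ → ℝ}
    (hδ : IsBackwardDifferenceOfOrder p q δ) (hp : p ≠ 0) (y : ℝ → E) (S : Set ℝ) (t τ : ℝ) :
    ∑ i ∈ Finset.range (q + 1), δ i • taylorWithinEval y p S t (t - i * τ) =
      τ • derivWithin y S t := by
  calc ∑ i ∈ Finset.range (q + 1), δ i • taylorWithinEval y p S t (t - i * τ)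
      = ∑ k ∈ Finset.range (p + 1), ((k ! : ℝ)⁻¹ * τ ^ k *
          ∑ i ∈ Finset.range (q + 1), δ i * (-(i : ℝ)) ^ k) • iteratedDerivWithin k y S t := by
        simp only [taylor_within_apply, Finset.smul_sum, Finset.mul_sum, Finset.sum_smul]
        rw [Finset.sum_comm]
        refine Finset.sum_congr rfl fun k _ ↦ Finset.sum_congr rfl fun i _ ↦ ?_
        rw [smul_smul, show t - i * τ - t = τ * -i by ring, mul_pow]
        ring_nf
    _ = ∑ k ∈ Finset.range (p + 1), if k = 1 then τ • derivWithin y S t else 0 := by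
        refine Finset.sum_congr rfl fun k hk ↦ ?_
        rw [hδ k (Finset.mem_range_succ_iff.1 hk)]
        split_ifs with hk1
        · simp [hk1, iteratedDerivWithin_one]
        · rw [mul_zero, zero_smul]
    _ = τ • derivWithin y S t := by
        rw [Finset.sum_ite_eq', if_pos (Finset.mem_range.2 (by lia))]

theorem bdf_peano_kernel_derivative_general [CompleteSpace E] {q : ℕ} {δ : ℕ → ℝ}
    (hδ : IsBackwardDifferenceOfOrder p q δ) (hp : p ≠ 0) (hτ : τ ≠ 0) (hS : UniqueDiffOn ℝ S)
    (hy : ContDiffOn ℝ (p + 1) y S) (hsub : uIcc (t - q * τ) t ⊆ S) :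
    (1 / τ) • ∑ i ∈ Finset.range (q + 1), δ i • y (t - i * τ) - derivWithin y S t =
      τ ^ p • ∫ s in (0 : ℝ)..q,
        peanoKernel p q δ s • iteratedDerivWithin (p + 1) y S (t - s * τ) := by
  have hremainder := sum_smul_sub_taylorWithinEval_eq_integral_peanoKernel δ hp hS hy hsub
  simp only [smul_sub, Finset.sum_sub_distrib, hδ.sum_smul_taylorWithinEval hp] at hremainder
  rw [← inv_smul_smul₀ hτ (derivWithin y S t), one_div, ← smul_sub, hremainder, pow_succ',
    mul_smul, inv_smul_smul₀ hτ]

end Remainder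

/-- **Peano kernel representation of the BDF consistency error.**
With `δ_0, …, δ_q` the `q`-step BDF coefficients (`1 ≤ q ≤ 5`), `1 ≤ p ≤ q`, `T, τ > 0`,
and `y : [0,T] → ℝ` being `(p+1)` times continuously differentiable, for every
`t* ∈ [qτ, T]`:
`(1/τ) Σ_{i=0}^q δ_i y(t* − iτ) − y′(t*) = τ^p ∫_0^q K_q(s) y^{(p+1)}(t* − sτ) ds`,
where `K_q(s) = −(1/p!) Σ_{i=0}^q δ_i ((s−i)_−)^p` and `(x)_− = min x 0`. -/
theorem bdf_peano_kernel_derivative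
    (q p : ℕ) (hq1 : 1 ≤ q) (hq5 : q ≤ 5) (hp1 : 1 ≤ p) (hpq : p ≤ q)
    (δ : ℕ → ℝ)
    (hδ : ∀ ζ : ℝ, ∑ j ∈ Finset.range (q + 1), δ j * ζ ^ j
        = ∑ l ∈ Finset.Icc 1 q, (1 / (l : ℝ)) * (1 - ζ) ^ l)
    (T τ : ℝ) (hT : 0 < T) (hτ : 0 < τ)
    (y : ℝ → ℝ) (hy : ContDiffOn ℝ (p + 1) y (Set.Icc 0 T))
    (tstar : ℝ) (htstar : tstar ∈ Set.Icc ((q : ℝ) * τ) T) :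
    (1 / τ) * (∑ i ∈ Finset.range (q + 1), δ i * y (tstar - (i : ℝ) * τ))
        - derivWithin y (Set.Icc 0 T) tstar
      = τ ^ p * ∫ s in (0 : ℝ)..(q : ℝ),
          (-(1 / (Nat.factorial p : ℝ))
              * ∑ i ∈ Finset.range (q + 1), δ i * (min (s - (i : ℝ)) 0) ^ p)
            * iteratedDerivWithin (p + 1) y (Set.Icc 0 T) (tstar - s * τ) := by
  have hsub : uIcc (tstar - q * τ) tstar ⊆ Icc 0 T := by
    have hqτ : 0 ≤ (q : ℝ) * τ := by positivity
    exact uIcc_subset_Icc ⟨by linarith [htstar.1], by linarith [htstar.2]⟩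
      ⟨by linarith [htstar.1], htstar.2⟩
  have horder : IsBackwardDifferenceOfOrder p q δ :=
    fun k hk ↦ isBackwardDifferenceOfOrder_bdf hδ k (hk.trans hpq)
  exact bdf_peano_kernel_derivative_general horder (by lia) hτ.ne' (uniqueDiffOn_Icc hT) hy hsub
end

section
/- Let N ≥ 1, let M ∈ ℝ^{N×N} be symmetric positive definite, let A ∈ ℝ^{N×N} be symmetric, and let c > 0, τ > 0. Then the 2N × 2N block matrix [[c·M, τ·A], [−τ·A, τ·M]] is invertible; equivalently, for every right-hand side (b_1, b_2) ∈ ℝ^N × ℝ^N the linear system c·M u + τ·A w = b_1, −τ·A u + τ·M w = b_2 has a unique solution (u, w). -/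
/-!
Eliminating the first unknown from the block system `[[P, B], [-Bᴴ, Q]]` leaves the Schur complement
`Q + Bᴴ * P⁻¹ * B`. The opposite signs of the off-diagonal blocks make this the sum of a positive
definite and a positive semidefinite matrix, so it is invertible for every coupling `B`.
-/

open Matrix

section CommRing

variable {R m n : Type*} [CommRing R] [Fintype m] [Fintype n] [DecidableEq m] [DecidableEq n]

theorem mulVec_bijective_iff_isUnit {A : Matrix n n R} :
    Function.Bijective A.mulVec ↔ IsUnit A :=
  ⟨fun h ↦ mulVec_surjective_iff_isUnit.mp h.surjective,
    fun h ↦ ⟨mulVec_injective_of_isUnit h, mulVec_surjective_iff_isUnit.mpr h⟩⟩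

theorem isUnit_fromBlocks_iff_existsUnique {A : Matrix m m R} {B : Matrix m n R}
    {C : Matrix n m R} {D : Matrix n n R} :
    IsUnit (fromBlocks A B C D) ↔ ∀ (b₁ : m → R) (b₂ : n → R), ∃! uw : (m → R) × (n → R),
      A *ᵥ uw.1 + B *ᵥ uw.2 = b₁ ∧ C *ᵥ uw.1 + D *ᵥ uw.2 = b₂ := by
  let e := Equiv.sumArrowEquivProdArrow m n R
  have mulVec_elim_iff (uw : (m → R) × (n → R)) (b₁ : m → R) (b₂ : n → R) :
      fromBlocks A B C D *ᵥ e.symm uw = e.symm (b₁, b₂) ↔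
        A *ᵥ uw.1 + B *ᵥ uw.2 = b₁ ∧ C *ᵥ uw.1 + D *ᵥ uw.2 = b₂ := by
    change fromBlocks A B C D *ᵥ Sum.elim uw.1 uw.2 = Sum.elim b₁ b₂ ↔ _
    rw [fromBlocks_mulVec, Sum.elim_comp_inl, Sum.elim_comp_inr, Sum.elim_eq_iff]
  simp only [← mulVec_bijective_iff_isUnit, Function.bijective_iff_existsUnique,
    ← e.symm.forall_congr_right, ← e.symm.existsUnique_congr_right, Prod.forall, mulVec_elim_iff]

end CommRing

section OrderedField

variable {K m n : Type*} [Field K] [PartialOrder K] [StarRing K] [AddLeftMono K]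
  [Fintype m] [Fintype n] [DecidableEq m] [DecidableEq n]
  {P : Matrix m m K} {Q : Matrix n n K}

theorem isUnit_fromBlocks_neg_conjTranspose (hP : P.PosDef) (hQ : Q.PosDef) (B : Matrix m n K) :
    IsUnit (fromBlocks P B (-Bᴴ) Q) := by
  have schur_posDef : (Q + Bᴴ * P⁻¹ * B).PosDef :=
    hQ.add_posSemidef (hP.inv.posSemidef.conjTranspose_mul_mul_same B)
  let := hP.isUnit.invertible
  rw [isUnit_fromBlocks_iff_of_invertible₁₁, invOf_eq_nonsing_inv, Matrix.neg_mul, Matrix.neg_mul,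
    sub_neg_eq_add]
  exact schur_posDef.isUnit

theorem bdf_step_well_posed_general (hP : P.PosDef) (hQ : Q.PosDef) (B : Matrix m n K) :
    IsUnit (fromBlocks P B (-Bᴴ) Q) ∧
    ∀ (b₁ : m → K) (b₂ : n → K), ∃! uw : (m → K) × (n → K),
      P *ᵥ uw.1 + B *ᵥ uw.2 = b₁ ∧ -(Bᴴ *ᵥ uw.1) + Q *ᵥ uw.2 = b₂ := by
  have h := isUnit_fromBlocks_neg_conjTranspose hP hQ B
  exact ⟨h, by simpa only [neg_mulVec] using isUnit_fromBlocks_iff_existsUnique.mp h⟩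

end OrderedField

/-- **Well-posedness of one time step of the linearly implicit BDF scheme.**
Let `M ∈ ℝ^{N×N}` be symmetric positive definite, `A ∈ ℝ^{N×N}` symmetric, and `c, τ > 0`.
Then the block matrix `[[c·M, τ·A], [−τ·A, τ·M]]` is invertible; equivalently, for every
right-hand side `(b₁, b₂)` the linear system `c·M u + τ·A w = b₁`, `−τ·A u + τ·M w = b₂`
has a unique solution `(u, w)`. -/
theorem bdf_step_well_posed
    (N : ℕ) (hN : 1 ≤ N) (M A : Matrix (Fin N) (Fin N) ℝ)
    (hMsymm : M.IsSymm) (hMpos : M.PosDef) (hAsymm : A.IsSymm)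
    (c τ : ℝ) (hc : 0 < c) (hτ : 0 < τ) :
    IsUnit (Matrix.fromBlocks (c • M) (τ • A) (-(τ • A)) (τ • M)) ∧
    ∀ b₁ b₂ : Fin N → ℝ, ∃! uw : (Fin N → ℝ) × (Fin N → ℝ),
      c • M.mulVec uw.1 + τ • A.mulVec uw.2 = b₁ ∧
      -(τ • A.mulVec uw.1) + τ • M.mulVec uw.2 = b₂ := by
  have hAconj : (τ • A)ᴴ = τ • A := by
    rw [conjTranspose_eq_transpose_of_trivial, (hAsymm.smul τ).eq]
  simpa only [hAconj, smul_mulVec] using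
    bdf_step_well_posed_general (hMpos.smul hc) (hMpos.smul hτ) (τ • A)
end

section
/- Fix an integer q with 1 ≤ q ≤ 5 and let δ_0, …, δ_q be the q-step BDF coefficients defined by Σ_{j=0}^q δ_j ζ^j = Σ_{l=1}^q (1/l)(1−ζ)^l. Then there exist a real number η with 0 ≤ η < 1 and a symmetric positive definite matrix G = (g_{ij}) ∈ ℝ^{q×q} such that for every real vector space H equipped with a semi-inner product (·,·) and all w_0, …, w_q ∈ H: (Σ_{i=0}^q δ_i w_{q−i}, w_q − η w_{q−1}) ≥ Σ_{i,j=1}^q g_{ij} (w_i, w_j) − Σ_{i,j=1}^q g_{ij} (w_{i−1}, w_{j−1}). -/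
/-! The theory of Dahlquist reduces the estimate to a decomposition
`2 Re (δ(ζ) conj(μ(ζ))) = ∑ c k |γ k (ζ)|²`, `c k ≥ 0`, on the unit circle, where `μ(ζ) = 1 - η ζ`
is the Nevanlinna–Odeh multiplier. The kernel of the form
`(δ w, μ w) - (∑ c k |γ k w|²) / 2` then has vanishing sums along its diagonals, so that it is the
increment of a quadratic form `G` under the shift `w i ↦ w (i + 1)`.

For the positivity of `G`, prolong `w 0, …, w (q - 1)` by the recursion `μ w = 0`. The prolonged
sequence tends to zero while its `G`-energy decreases to zero, so that the energy is nonnegative.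
The decomposition chosen contains the square of `w 1 - w 0` with a positive weight; hence if the
energy vanishes initially, then the sequence is constant, and therefore zero.

For BDF methods of order at most five, the multiplier with `η = 5/6` serves all orders at once. -/

namespace GStability

open Finset Polynomial Filter Topology

section Potential

variable {R : Type*} [CommRing R] {N : ℕ → ℕ → R} {q : ℕ}

/-- The kernel `G` obtained from `N` by (negated) summation along diagonals: it solves
`G (i - 1) (j - 1) - G i j = N i j`, where `G` vanishes at negative indices. -/
def diagonalPotential (N : ℕ → ℕ → R) : ℕ → ℕ → R
  | 0, j => -N 0 j
  | i + 1, 0 => -N (i + 1) 0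
  | i + 1, j + 1 => diagonalPotential N i j - N (i + 1) (j + 1)

theorem diagonalPotential_comm (hN : ∀ i j, N i j = N j i) :
    ∀ i j, diagonalPotential N i j = diagonalPotential N j i
  | 0, 0 => rfl
  | 0, j + 1 => congrArg Neg.neg (hN 0 (j + 1))
  | i + 1, 0 => congrArg Neg.neg (hN (i + 1) 0)
  | i + 1, j + 1 => congrArg₂ (· - ·) (diagonalPotential_comm hN i j) (hN (i + 1) (j + 1))

theorem diagonalPotential_add_right (N : ℕ → ℕ → R) (i d : ℕ) :
    diagonalPotential N i (i + d) = -∑ k ∈ range (i + 1), N k (k + d) := by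
  induction i with
  | zero => simp [diagonalPotential]
  | succ i ih =>
    rw [sum_range_succ, show i + 1 + d = i + d + 1 by ring, diagonalPotential, ih]
    ring

theorem sum_diagonalPotential_mul_shift_sub
    (hrow : ∀ i ≤ q, diagonalPotential N i q = 0) (hcol : ∀ j ≤ q, diagonalPotential N q j = 0)
    (F : ℕ → ℕ → R) :
    ∑ i ∈ range q, ∑ j ∈ range q, diagonalPotential N i j * F (i + 1) (j + 1)
        - ∑ i ∈ range q, ∑ j ∈ range q, diagonalPotential N i j * F i j
      = ∑ i ∈ range (q + 1), ∑ j ∈ range (q + 1), N i j * F i j := by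
  set G := diagonalPotential N
  have zero_left (j) : N 0 j + G 0 j = 0 := by simp [G, diagonalPotential]
  have zero_right : ∀ i, N i 0 + G i 0 = 0
    | 0 => zero_left 0
    | i + 1 => by simp [G, diagonalPotential]
  have succ_succ (i j) : N (i + 1) (j + 1) + G (i + 1) (j + 1) = G i j := by
    simp [G, diagonalPotential]
  have shifted : ∑ i ∈ range (q + 1), ∑ j ∈ range (q + 1), (N i j + G i j) * F i j
      = ∑ i ∈ range q, ∑ j ∈ range q, G i j * F (i + 1) (j + 1) := by
    simp [sum_range_succ', zero_left, zero_right, succ_succ]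
  have last_row : ∑ j ∈ range (q + 1), G q j * F q j = 0 :=
    sum_eq_zero fun j hj ↦ by rw [hcol j (mem_range_succ_iff.mp hj), zero_mul]
  have extended : ∑ i ∈ range (q + 1), ∑ j ∈ range (q + 1), G i j * F i j
      = ∑ i ∈ range q, ∑ j ∈ range q, G i j * F i j := by
    rw [sum_range_succ, last_row, add_zero]
    refine sum_congr rfl fun i hi ↦ ?_
    rw [sum_range_succ, hrow i (mem_range.mp hi).le, zero_mul, add_zero]
  rw [← shifted, ← extended]
  simp only [add_mul, sum_add_distrib, add_sub_cancel_right]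

end Potential

section Reflect

variable {K : Type*} [Field K] {q : ℕ}

theorem eval_reflect {p : K[X]} (hp : p.natDegree ≤ q) {x : K} (hx : x ≠ 0) :
    (p.reflect q).eval x = x ^ q * p.eval x⁻¹ := by
  let := invertibleOfNonzero (inv_ne_zero hx)
  have h := eval₂_reflect_mul_pow (RingHom.id K) x⁻¹ q p hp
  simp only [invOf_eq_inv, inv_inv, inv_pow] at h
  simp only [eval, ← h]
  field_simp

theorem coeff_mul_reflect {R : Type*} [CommSemiring R] (p r : R[X]) {i q : ℕ} (hi : i ≤ q) :
    ∑ k ∈ range (i + 1), p.coeff (q - k) * r.coeff (i - k) = (p.reflect q * r).coeff i := by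
  rw [coeff_mul, Nat.sum_antidiagonal_eq_sum_range_succ_mk]
  refine sum_congr rfl fun k hk ↦ ?_
  rw [coeff_reflect, revAt_le ((mem_range_succ_iff.mp hk).trans hi)]

end Reflect

section Energy

variable {H : Type*} [AddCommGroup H] [Module ℝ H] {ι : Type*} [Fintype ι]
  {q : ℕ} {δ μ : ℝ[X]} {c : ι → ℝ} {γ : ι → ℝ[X]}

/-- The quadratic energy `∑ G a b (w a, w b)` of the first `q` terms of a sequence. -/
def energy (G : Matrix (Fin q) (Fin q) ℝ) (B : LinearMap.BilinForm ℝ H) (w : ℕ → H) : ℝ :=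
  ∑ a, ∑ b, G a b * B (w a) (w b)

/-- The value at time `q` of the difference operator `p(E⁻¹)`, where `E` is the forward shift:
the coefficient of `X ^ i` acts on the term of index `q - i`. -/
def windowSum (q : ℕ) (p : ℝ[X]) (w : ℕ → H) : H :=
  ∑ i ∈ range (q + 1), p.coeff i • w (q - i)

theorem windowSum_sub (q : ℕ) (p r : ℝ[X]) (w : ℕ → H) :
    windowSum q (p - r) w = windowSum q p w - windowSum q r w := by
  simp only [windowSum, coeff_sub, sub_smul, sum_sub_distrib]

theorem windowSum_C_mul_X_pow (a : ℝ) {k : ℕ} (hk : k ≤ q) (w : ℕ → H) :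
    windowSum q (C a * X ^ k) w = a • w (q - k) := by
  simp [windowSum, ite_smul, Nat.lt_succ_of_le hk]

theorem windowSum_eq_sum_reverse (q : ℕ) (p : ℝ[X]) (w : ℕ → H) :
    windowSum q p w = ∑ i ∈ range (q + 1), p.coeff (q - i) • w i := by
  rw [windowSum, ← sum_range_reflect]
  refine sum_congr rfl fun i hi ↦ ?_
  rw [Nat.add_sub_cancel, Nat.sub_sub_self (mem_range_succ_iff.mp hi)]

theorem bilin_windowSum (B : LinearMap.BilinForm ℝ H) (q : ℕ) (p r : ℝ[X]) (w : ℕ → H) :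
    B (windowSum q p w) (windowSum q r w) = ∑ i ∈ range (q + 1), ∑ j ∈ range (q + 1),
      p.coeff (q - i) * r.coeff (q - j) * B (w i) (w j) := by
  simp only [windowSum_eq_sum_reverse, map_sum, LinearMap.sum_apply, map_smul,
    LinearMap.smul_apply, smul_eq_mul, mul_sum, mul_assoc]
  rw [sum_comm]
  simp only [mul_left_comm]

/-- On `|ζ| = 1`, where `ζ⁻¹` is the conjugate of `ζ`, this is the decomposition
`2 Re (δ(ζ) conj(μ(ζ))) = ∑ c k |γ k (ζ)|²` of the real part of a symbol into squares. Both sides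
are Laurent polynomials, so that it is enough to require it at the nonzero real numbers. -/
def IsSpectralSum (δ μ : ℝ[X]) (c : ι → ℝ) (γ : ι → ℝ[X]) : Prop :=
  ∀ x : ℝ, x ≠ 0 → δ.eval x * μ.eval x⁻¹ + μ.eval x * δ.eval x⁻¹
    = ∑ k, c k * ((γ k).eval x * (γ k).eval x⁻¹)

theorem IsSpectralSum.reflect_mul_add (h : IsSpectralSum δ μ c γ) (hδ : δ.natDegree ≤ q)
    (hμ : μ.natDegree ≤ q) (hγ : ∀ k, (γ k).natDegree ≤ q) :
    δ.reflect q * μ + μ.reflect q * δ = ∑ k, C (c k) * ((γ k).reflect q * γ k) := by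
  refine eq_of_infinite_eval_eq _ _ (Set.Infinite.mono (fun x hx ↦ ?_)
    (Set.finite_singleton (0 : ℝ)).infinite_compl)
  simp only [Set.mem_ofPred_eq, eval_add, eval_mul, eval_finsetSum, eval_C, eval_reflect hδ hx,
    eval_reflect hμ hx, eval_reflect (hγ _) hx]
  calc _ = x ^ q * (δ.eval x * μ.eval x⁻¹ + μ.eval x * δ.eval x⁻¹) := by ring
    _ = _ := by rw [h x hx, mul_sum]; exact sum_congr rfl fun k _ ↦ by ring

/-- The symmetric kernel of the quadratic form `(δ w, μ w) - (∑ c k (γ k w, γ k w)) / 2`, where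
`p w` stands for `windowSum q p w`. -/
noncomputable def defect (q : ℕ) (δ μ : ℝ[X]) (c : ι → ℝ) (γ : ι → ℝ[X]) (i j : ℕ) : ℝ :=
  (δ.coeff (q - i) * μ.coeff (q - j) + μ.coeff (q - i) * δ.coeff (q - j)
    - ∑ k, c k * ((γ k).coeff (q - i) * (γ k).coeff (q - j))) / 2

theorem defect_comm (i j : ℕ) : defect q δ μ c γ i j = defect q δ μ c γ j i := by
  simp only [defect, mul_comm, add_comm]

theorem sum_defect_mul {B : LinearMap.BilinForm ℝ H} (hB : B.IsSymm) (w : ℕ → H) :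
    ∑ i ∈ range (q + 1), ∑ j ∈ range (q + 1), defect q δ μ c γ i j * B (w i) (w j)
      = B (windowSum q δ w) (windowSum q μ w)
        - (∑ k, c k * B (windowSum q (γ k) w) (windowSum q (γ k) w)) / 2 := by
  have symm : B (windowSum q μ w) (windowSum q δ w) = B (windowSum q δ w) (windowSum q μ w) :=
    hB.eq _ _
  have pointwise (i j) : 2 * (defect q δ μ c γ i j * B (w i) (w j))
      = δ.coeff (q - i) * μ.coeff (q - j) * B (w i) (w j)
        + μ.coeff (q - i) * δ.coeff (q - j) * B (w i) (w j)
        - ∑ k, c k * ((γ k).coeff (q - i) * (γ k).coeff (q - j) * B (w i) (w j)) := by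
    simp only [← mul_assoc (c _), ← sum_mul, defect]
    ring
  have expand : B (windowSum q δ w) (windowSum q μ w) + B (windowSum q μ w) (windowSum q δ w)
      - ∑ k, c k * B (windowSum q (γ k) w) (windowSum q (γ k) w)
      = 2 * ∑ i ∈ range (q + 1), ∑ j ∈ range (q + 1), defect q δ μ c γ i j * B (w i) (w j) := by
    simp only [bilin_windowSum, mul_sum, pointwise, sum_sub_distrib, sum_add_distrib]
    exact congrArg _ (sum_comm.trans (sum_congr rfl fun _ _ ↦ sum_comm))
  linarith

theorem IsSpectralSum.diagonalPotential_defect (h : IsSpectralSum δ μ c γ) (hδ : δ.natDegree ≤ q)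
    (hμ : μ.natDegree ≤ q) (hγ : ∀ k, (γ k).natDegree ≤ q) {i : ℕ} (hi : i ≤ q) :
    diagonalPotential (defect q δ μ c γ) i q = 0 := by
  obtain ⟨d, rfl⟩ := Nat.exists_eq_add_of_le hi
  have index (k) : i + d - (k + d) = i - k := by omega
  have coeff_eq := congrArg (coeff · i) (h.reflect_mul_add hδ hμ hγ)
  simp only [coeff_add, finsetSum_coeff, coeff_C_mul, ← coeff_mul_reflect _ _ hi, mul_sum]
    at coeff_eq
  rw [sum_comm] at coeff_eq
  rw [diagonalPotential_add_right, neg_eq_zero]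
  simp only [defect, index, ← sum_div, sum_sub_distrib, sum_add_distrib, coeff_eq, sub_self,
    zero_div]

/-- Dahlquist's matrix `G`, for which `defect` measures the increment of `energy` under a shift of
the sequence. -/
noncomputable def energyMatrix (q : ℕ) (δ μ : ℝ[X]) (c : ι → ℝ) (γ : ι → ℝ[X]) :
    Matrix (Fin q) (Fin q) ℝ :=
  .of fun a b ↦ diagonalPotential (defect q δ μ c γ) a b

theorem isSymm_energyMatrix : (energyMatrix q δ μ c γ).IsSymm :=
  .ext fun _ _ ↦ diagonalPotential_comm defect_comm _ _

theorem IsSpectralSum.energy_shift_sub (h : IsSpectralSum δ μ c γ) (hδ : δ.natDegree ≤ q)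
    (hμ : μ.natDegree ≤ q) (hγ : ∀ k, (γ k).natDegree ≤ q)
    {B : LinearMap.BilinForm ℝ H} (hB : B.IsSymm) (w : ℕ → H) :
    energy (energyMatrix q δ μ c γ) B (fun n ↦ w (n + 1)) - energy (energyMatrix q δ μ c γ) B w
      = B (windowSum q δ w) (windowSum q μ w)
        - (∑ k, c k * B (windowSum q (γ k) w) (windowSum q (γ k) w)) / 2 := by
  have hrow : ∀ i ≤ q, diagonalPotential (defect q δ μ c γ) i q = 0 :=
    fun _ ↦ h.diagonalPotential_defect hδ hμ hγ
  have hcol : ∀ j ≤ q, diagonalPotential (defect q δ μ c γ) q j = 0 :=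
    fun j hj ↦ (diagonalPotential_comm defect_comm q j).trans (hrow j hj)
  rw [← sum_defect_mul hB, ← sum_diagonalPotential_mul_shift_sub hrow hcol]
  simp only [energy, energyMatrix, Matrix.of_apply, sum_range]

end Energy

section PosDef

variable {q : ℕ}

theorem exists_geometric_extension (x : Fin q → ℝ) {η : ℝ} (hη₀ : 0 ≤ η) (hη₁ : η < 1) :
    ∃ w : ℕ → ℝ, (∀ a : Fin q, w a = x a) ∧ (∀ n, w (q + n) = η * w (q - 1 + n)) ∧
      Tendsto w atTop (𝓝 0) := by
  cases q with
  | zero => exact ⟨0, fun a ↦ a.elim0, by simp, tendsto_const_nhds⟩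
  | succ p =>
    refine ⟨fun n ↦ η ^ (n - p) * x ⟨min n p, by omega⟩, fun a ↦ ?_, fun n ↦ ?_, ?_⟩
    · have ha : (a : ℕ) ≤ p := Nat.le_of_lt_succ a.isLt
      simp [ha]
    · simp [Nat.add_right_comm p 1 n, Nat.add_assoc p n 1, pow_succ', mul_assoc]
    · refine (tendsto_add_atTop_iff_nat p).mp ?_
      simpa [Fin.last] using
        (tendsto_pow_atTop_nhds_zero_of_lt_one hη₀ hη₁).mul_const (x (Fin.last p))

theorem tendsto_energy_shift_zero (G : Matrix (Fin q) (Fin q) ℝ) {w : ℕ → ℝ}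
    (hw : Tendsto w atTop (𝓝 0)) :
    Tendsto (fun n ↦ energy G (LinearMap.mul ℝ ℝ) fun i ↦ w (i + n)) atTop (𝓝 0) := by
  have shift (a : ℕ) : Tendsto (fun n ↦ w (a + n)) atTop (𝓝 0) :=
    hw.comp (tendsto_atTop_mono (Nat.le_add_left · a) tendsto_id)
  simpa [energy] using tendsto_finsetSum univ fun (a : Fin q) _ ↦
    tendsto_finsetSum univ fun (b : Fin q) _ ↦ ((shift a).mul (shift b)).const_mul (G a b)

theorem posDef_of_energy_decay {G : Matrix (Fin q) (Fin q) ℝ} (hG : G.IsSymm) {η κ : ℝ}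
    (hη₀ : 0 ≤ η) (hη₁ : η < 1) (hκ : 0 < κ)
    (decay : ∀ w : ℕ → ℝ, w q = η * w (q - 1) →
      energy G (LinearMap.mul ℝ ℝ) (fun i ↦ w (i + 1)) + κ * (w 1 - w 0) ^ 2
        ≤ energy G (LinearMap.mul ℝ ℝ) w) :
    G.PosDef := by
  refine .of_dotProduct_mulVec_pos (by simpa [Matrix.IsHermitian] using hG.eq) fun x hx ↦ ?_
  obtain ⟨w, hwx, hw_rec, hw_lim⟩ := exists_geometric_extension x hη₀ hη₁
  set E : ℕ → ℝ := fun n ↦ energy G (LinearMap.mul ℝ ℝ) fun i ↦ w (i + n)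
  have E_zero : star x ⬝ᵥ G.mulVec x = E 0 := by
    simp [E, energy, hwx, dotProduct, Matrix.mulVec, mul_sum, mul_left_comm]
  have E_succ (n) : E (n + 1) + κ * (w (n + 1) - w n) ^ 2 ≤ E n := by
    simpa [E, add_comm, add_left_comm] using
      decay (fun i ↦ w (i + n)) (hw_rec n)
  have E_anti : Antitone E := antitone_nat_of_succ_le fun n ↦
    (le_add_of_nonneg_right (by positivity)).trans (E_succ n)
  have E_nonneg (n) : 0 ≤ E n := E_anti.le_of_tendsto (tendsto_energy_shift_zero G hw_lim) n
  rw [E_zero]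
  by_contra! E_zero_le
  have w_succ (n) : w (n + 1) = w n := by
    have : κ * (w (n + 1) - w n) ^ 2 ≤ 0 := by
      linarith [E_succ n, E_nonneg (n + 1), E_anti (Nat.zero_le n)]
    have : (w (n + 1) - w n) ^ 2 ≤ 0 := nonpos_of_mul_nonpos_right this hκ
    exact sub_eq_zero.mp (sq_nonpos_iff _ |>.mp this)
  have w_eq_zero (n) : w n = 0 := by
    have w_const (m) : w m = w 0 := by
      induction m with
      | zero => rfl
      | succ m ih => rw [w_succ, ih]
    rw [w_const n]
    exact tendsto_nhds_unique (tendsto_const_nhds.congr fun m ↦ (w_const m).symm) hw_lim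
  exact hx (funext fun a ↦ (hwx a).symm.trans (w_eq_zero a))

end PosDef

section Dahlquist

variable {ι : Type*} [Fintype ι] {q : ℕ} {δ μ : ℝ[X]} {c : ι → ℝ} {γ : ι → ℝ[X]}

/-- The Nevanlinna–Odeh multiplier `μ(ζ) = 1 - η ζ`, which turns a sequence `w` into the test
element `w q - η w (q - 1)`. -/
noncomputable def multiplier (η : ℝ) : ℝ[X] :=
  1 - C η * X

theorem windowSum_multiplier {H : Type*} [AddCommGroup H] [Module ℝ H] (hq : 1 ≤ q) (η : ℝ)
    (w : ℕ → H) : windowSum q (multiplier η) w = w q - η • w (q - 1) := by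
  have h₀ := windowSum_C_mul_X_pow 1 q.zero_le w
  have h₁ := windowSum_C_mul_X_pow η hq w
  simp only [map_one, pow_zero, mul_one, pow_one, one_smul, Nat.sub_zero] at h₀ h₁
  rw [multiplier, windowSum_sub, h₀, h₁]

theorem natDegree_multiplier_le (hq : 1 ≤ q) (η : ℝ) : (multiplier η).natDegree ≤ q :=
  le_trans (by unfold multiplier; compute_degree) hq

theorem windowSum_first_difference (hq : 1 ≤ q) (w : ℕ → ℝ) :
    windowSum q (X ^ (q - 1) * (1 - X)) w = w 1 - w 0 := by
  have h₀ := windowSum_C_mul_X_pow 1 (le_refl q) w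
  have h₁ := windowSum_C_mul_X_pow 1 (Nat.sub_le q 1) w
  simp only [map_one, one_mul, one_smul, Nat.sub_self, Nat.sub_sub_self hq] at h₀ h₁
  rw [mul_sub, mul_one, pow_sub_one_mul (by omega), windowSum_sub, h₀, h₁]

theorem IsSpectralSum.posDef_energyMatrix {η : ℝ} (h : IsSpectralSum δ (multiplier η) c γ)
    (hq : 1 ≤ q) (hη₀ : 0 ≤ η) (hη₁ : η < 1) (hδ : δ.natDegree ≤ q)
    (hγ : ∀ k, (γ k).natDegree ≤ q) (hc : ∀ k, 0 ≤ c k)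
    {k : ι} (hγk : γ k = X ^ (q - 1) * (1 - X)) (hck : 0 < c k) :
    (energyMatrix q δ (multiplier η) c γ).PosDef := by
  refine posDef_of_energy_decay isSymm_energyMatrix hη₀ hη₁ (half_pos hck) fun w hw ↦ ?_
  have hB : LinearMap.BilinForm.IsSymm (LinearMap.mul ℝ ℝ) := ⟨mul_comm⟩
  have increment := h.energy_shift_sub hδ (natDegree_multiplier_le hq η) hγ hB w
  have test_eq_zero : windowSum q (multiplier η) w = 0 := by
    rw [windowSum_multiplier hq, hw, smul_eq_mul, sub_self]
  have dissipation : c k * (w 1 - w 0) ^ 2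
      ≤ ∑ l, c l * LinearMap.mul ℝ ℝ (windowSum q (γ l) w) (windowSum q (γ l) w) := by
    rw [← windowSum_first_difference hq, ← hγk, sq]
    exact single_le_sum (f := fun l ↦ c l * (windowSum q (γ l) w * windowSum q (γ l) w))
      (fun l _ ↦ mul_nonneg (hc l) (mul_self_nonneg _)) (mem_univ k)
  rw [test_eq_zero, map_zero] at increment
  linarith

theorem IsSpectralSum.energy_shift_sub_le {H : Type*} [AddCommGroup H] [Module ℝ H]
    (h : IsSpectralSum δ μ c γ) (hδ : δ.natDegree ≤ q) (hμ : μ.natDegree ≤ q)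
    (hγ : ∀ k, (γ k).natDegree ≤ q) (hc : ∀ k, 0 ≤ c k)
    {B : LinearMap.BilinForm ℝ H} (hB : B.IsPosSemidef) (w : ℕ → H) :
    energy (energyMatrix q δ μ c γ) B (fun n ↦ w (n + 1)) - energy (energyMatrix q δ μ c γ) B w
      ≤ B (windowSum q δ w) (windowSum q μ w) := by
  rw [h.energy_shift_sub hδ hμ hγ hB.isSymm]
  have : 0 ≤ ∑ k, c k * B (windowSum q (γ k) w) (windowSum q (γ k) w) :=
    sum_nonneg fun k _ ↦ mul_nonneg (hc k) (hB.nonneg _)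
  linarith

end Dahlquist

theorem exists_isPosSemidef_eq {H : Type*} [AddCommGroup H] [Module ℝ H] {B : H → H → ℝ}
    (symm : ∀ x y, B x y = B y x) (add_left : ∀ x y z, B (x + y) z = B x z + B y z)
    (smul_left : ∀ (c : ℝ) (x y), B (c • x) y = c * B x y) (nonneg : ∀ x, 0 ≤ B x x) :
    ∃ B' : LinearMap.BilinForm ℝ H, B'.IsPosSemidef ∧ ∀ x y, B' x y = B x y :=
  ⟨LinearMap.mk₂ ℝ B add_left smul_left
      (fun x y z ↦ by rw [symm x, add_left, symm y, symm z])
      (fun c x y ↦ by rw [symm x, smul_left, symm y, smul_eq_mul]),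
    ⟨⟨symm⟩, ⟨nonneg⟩⟩, fun _ _ ↦ rfl⟩

section BDF

variable {q : ℕ}

/-- The generating polynomial `δ(ζ)` of the `q`-step backward differentiation formula. -/
noncomputable def bdfPolynomial (q : ℕ) : ℝ[X] :=
  ∑ l ∈ Icc 1 q, C (1 / (l : ℝ)) * (1 - X) ^ l

theorem natDegree_bdfPolynomial_le (q : ℕ) : (bdfPolynomial q).natDegree ≤ q := by
  refine natDegree_sum_le_of_forall_le _ _ fun l hl ↦ ?_
  refine le_trans ?_ (mem_Icc.mp hl).2
  compute_degree

theorem coeff_bdfPolynomial {δ : ℕ → ℝ}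
    (hδ : ∀ ζ : ℝ, ∑ j ∈ range (q + 1), δ j * ζ ^ j
      = ∑ l ∈ Icc 1 q, (1 / (l : ℝ)) * (1 - ζ) ^ l) {j : ℕ} (hj : j ≤ q) :
    (bdfPolynomial q).coeff j = δ j := by
  have : bdfPolynomial q = ∑ j ∈ range (q + 1), C (δ j) * X ^ j := by
    refine Polynomial.funext fun ζ ↦ ?_
    simpa [bdfPolynomial, eval_finsetSum] using (hδ ζ).symm
  simp [this, finsetSum_coeff, Nat.lt_succ_of_le hj]

theorem windowSum_bdfPolynomial {H : Type*} [AddCommGroup H] [Module ℝ H] {δ : ℕ → ℝ}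
    (hδ : ∀ ζ : ℝ, ∑ j ∈ range (q + 1), δ j * ζ ^ j
      = ∑ l ∈ Icc 1 q, (1 / (l : ℝ)) * (1 - ζ) ^ l) (w : ℕ → H) :
    windowSum q (bdfPolynomial q) w = ∑ i ∈ range (q + 1), δ i • w (q - i) :=
  sum_congr rfl fun i hi ↦ by rw [coeff_bdfPolynomial hδ (mem_range_succ_iff.mp hi)]

/-- The weights `c k` of a decomposition `2 Re (δ(ζ) conj(μ(ζ))) = ∑ c k |γ k (ζ)|²` for the BDF
symbol `δ` and `μ(ζ) = 1 - (5/6) ζ`. In terms of `y = |1 - ζ|²`, for `|ζ| = 1`, the left-hand side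
is `y r(y)` with
* `q = 1`: `r = 11/6`
* `q = 2`: `r = 5/3 + y/2`
* `q = 3`: `r = 44/27 + (y - 1/3)²/3`
* `q = 4`: `r = 65/54 + (3/8) (y - 10/9)² + (1/4) y (y - 5/3)²`
* `q = 5`: `r = 115/20736 + (1/5) (y² - (10/3) y + 415/144)² + (3/4) y (y - 20/9)²`

The value for other `q` is irrelevant. -/
noncomputable def bdfWeight : ℕ → Fin 3 → ℝ
  | 1 => ![11 / 6, 0, 0]
  | 2 => ![5 / 3, 0, 1 / 2]
  | 3 => ![44 / 27, 1 / 3, 0]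
  | 4 => ![65 / 54, 3 / 8, 1 / 4]
  | 5 => ![115 / 20736, 1 / 5, 3 / 4]
  | _ => 0

/-- The polynomials `γ k` of the decomposition described at `bdfWeight`. Since `(1 - ζ)² = -y ζ`,
real polynomials in `y` become, up to a power of `-ζ`, polynomials in `ζ`: for instance
`|y - a| = |(1 - ζ)² + a ζ|`. -/
noncomputable def bdfFactor : ℕ → Fin 3 → ℝ[X]
  | 1 => ![1 - X, 0, 0]
  | 2 => ![X * (1 - X), 0, (1 - X) ^ 2]
  | 3 => ![X ^ 2 * (1 - X), (1 - X) * ((1 - X) ^ 2 + C (1 / 3) * X), 0]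
  | 4 => ![X ^ 3 * (1 - X), (1 - X) * ((1 - X) ^ 2 + C (10 / 9) * X),
      (1 - X) ^ 2 * ((1 - X) ^ 2 + C (5 / 3) * X)]
  | 5 => ![X ^ 4 * (1 - X),
      (1 - X) * ((1 - X) ^ 4 + C (10 / 3) * X * (1 - X) ^ 2 + C (415 / 144) * X ^ 2),
      (1 - X) ^ 2 * ((1 - X) ^ 2 + C (20 / 9) * X)]
  | _ => 0

theorem bdfWeight_nonneg (q : ℕ) (k : Fin 3) : 0 ≤ bdfWeight q k := by
  unfold bdfWeight
  split <;> fin_cases k <;> norm_num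

theorem bdfWeight_zero_pos (hq₁ : 1 ≤ q) (hq₅ : q ≤ 5) : 0 < bdfWeight q 0 := by
  interval_cases q <;> norm_num [bdfWeight]

theorem bdfFactor_zero (hq₁ : 1 ≤ q) (hq₅ : q ≤ 5) :
    bdfFactor q 0 = X ^ (q - 1) * (1 - X) := by
  interval_cases q <;> simp [bdfFactor]

theorem natDegree_bdfFactor_le (q : ℕ) (k : Fin 3) : (bdfFactor q k).natDegree ≤ q := by
  unfold bdfFactor
  split <;> fin_cases k <;>
  · simp only [Fin.zero_eta, Fin.mk_one, Fin.reduceFinMk, Fin.isValue, Matrix.cons_val,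
      Matrix.cons_val_zero, Matrix.cons_val_one, Pi.zero_apply]
    compute_degree!

theorem isSpectralSum_bdfPolynomial (hq₁ : 1 ≤ q) (hq₅ : q ≤ 5) :
    IsSpectralSum (bdfPolynomial q) (multiplier (5 / 6)) (bdfWeight q) (bdfFactor q) := by
  intro x hx
  interval_cases q <;>
  · simp only [bdfPolynomial, multiplier, bdfWeight, bdfFactor, Fin.sum_univ_three,
      sum_Icc_succ_top (Nat.le_add_left 1 _), Icc_self, sum_singleton, Nat.reduceAdd,
      Matrix.cons_val, Matrix.cons_val_zero, Matrix.cons_val_one, eval_zero, eval_one, eval_X,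
      eval_C, eval_sub, eval_add, eval_mul, eval_pow, Nat.cast_one, Nat.cast_ofNat]
    field_simp
    ring

end BDF

end GStability

/-- **Combined Nevanlinna–Odeh multiplier / Dahlquist G-stability estimate for BDF methods.**
For `1 ≤ q ≤ 5` and the `q`-step BDF coefficients `δ_0, …, δ_q`, there exist `η ∈ [0,1)`
and a symmetric positive definite matrix `G ∈ ℝ^{q×q}` such that for every real vector
space `H` with a semi-inner product `B` and all `w_0, …, w_q ∈ H`:
`(Σ_{i=0}^q δ_i w_{q−i}, w_q − η w_{q−1})
  ≥ Σ_{i,j=1}^q g_{ij}(w_i,w_j) − Σ_{i,j=1}^q g_{ij}(w_{i−1},w_{j−1})`. -/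
theorem bdf_energy_estimate_inequality
    (q : ℕ) (hq1 : 1 ≤ q) (hq5 : q ≤ 5) (δ : ℕ → ℝ)
    (hδ : ∀ ζ : ℝ, ∑ j ∈ Finset.range (q + 1), δ j * ζ ^ j
        = ∑ l ∈ Finset.Icc 1 q, (1 / (l : ℝ)) * (1 - ζ) ^ l) :
    ∃ η : ℝ, 0 ≤ η ∧ η < 1 ∧
    ∃ G : Matrix (Fin q) (Fin q) ℝ, G.IsSymm ∧ G.PosDef ∧
      ∀ (H : Type*) [AddCommGroup H] [Module ℝ H],
      ∀ B : H → H → ℝ,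
        (∀ x y, B x y = B y x) →
        (∀ x y z, B (x + y) z = B x z + B y z) →
        (∀ (c : ℝ) (x y), B (c • x) y = c * B x y) →
        (∀ x, 0 ≤ B x x) →
        ∀ w : ℕ → H,
          (∑ a : Fin q, ∑ b : Fin q, G a b * B (w ((a : ℕ) + 1)) (w ((b : ℕ) + 1)))
            - (∑ a : Fin q, ∑ b : Fin q, G a b * B (w (a : ℕ)) (w (b : ℕ)))
          ≤ B (∑ i ∈ Finset.range (q + 1), δ i • w (q - i)) (w q - η • w (q - 1)) := by
  have spectral := GStability.isSpectralSum_bdfPolynomial hq1 hq5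
  refine ⟨5 / 6, by norm_num, by norm_num, _, GStability.isSymm_energyMatrix,
    spectral.posDef_energyMatrix hq1 (by norm_num) (by norm_num)
      (GStability.natDegree_bdfPolynomial_le q) (GStability.natDegree_bdfFactor_le q)
      (GStability.bdfWeight_nonneg q) (GStability.bdfFactor_zero hq1 hq5)
      (GStability.bdfWeight_zero_pos hq1 hq5),
    fun H _ _ B symm add_left smul_left nonneg w ↦ ?_⟩
  obtain ⟨B', hB', B'_eq⟩ :=
    GStability.exists_isPosSemidef_eq symm add_left smul_left nonneg
  have estimate := spectral.energy_shift_sub_le (GStability.natDegree_bdfPolynomial_le q)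
    (GStability.natDegree_multiplier_le hq1 _) (GStability.natDegree_bdfFactor_le q)
    (GStability.bdfWeight_nonneg q) hB' w
  rw [GStability.windowSum_bdfPolynomial hδ, GStability.windowSum_multiplier hq1] at estimate
  simpa only [GStability.energy, B'_eq] using estimate
end
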